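/- Let n ≥ 2 and let P be a finite-volume non-compact right-angled convex hyperbolic n-polyhedron. Let v′_∞(P) be the minimum, over all facets F of P, of the number of ideal vertices of F. Then 2(n − 1) · v_∞(P) ≥ a_{n−1}(P) · v′_∞(P); equivalently v_∞(P) ≥ a_{n−1}(P) · v′_∞(P) / (2(n − 1)). -/

import Mathlib

open scoped BigOperators

noncomputable section

/-- The Minkowski bilinear form `⟨x,y⟩ = -x₀y₀ + x₁y₁ + ⋯ + xₙyₙ` on `ℝ^{n+1}`. -/
def mink {n : ℕ} (x y : Fin (n + 1) → ℝ) : ℝ :=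
  -(x 0 * y 0) + ∑ i : Fin n, x i.succ * y i.succ

/-- The hyperboloid model of the hyperbolic space `ℍⁿ`. -/
def Hyperboloid (n : ℕ) : Set (Fin (n + 1) → ℝ) :=
  {x | mink x x = -1 ∧ 0 < x 0}

/-- The Klein projection `x ↦ (x₁/x₀, …, xₙ/x₀)` of the hyperboloid onto the unit ball. -/
def kleinMap {n : ℕ} (x : Fin (n + 1) → ℝ) : EuclideanSpace ℝ (Fin n) :=
  WithLp.toLp 2 fun i => x i.succ / x 0

/-- Dimension of a subset of a real vector space: the rank of its vector span. -/
def sdim {n : ℕ} (s : Set (EuclideanSpace ℝ (Fin n))) : ℕ :=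
  Module.finrank ℝ (vectorSpan ℝ s)

/-- A convex hyperbolic `n`-polyhedron: a finite intersection of hyperbolic half-spaces
`H_{eᵢ}⁻ = {x : ⟨eᵢ,x⟩ ≤ 0}` (with `⟨eᵢ,eᵢ⟩ = 1`) having nonempty interior
(equivalently, its Klein-model image has nonempty interior in `ℝⁿ`). -/
structure HypPolyhedron (n : ℕ) where
  m : ℕ
  e : Fin m → (Fin (n + 1) → ℝ)
  unit : ∀ i, mink (e i) (e i) = 1
  nonempty_int :
    (interior (kleinMap '' {x ∈ Hyperboloid n | ∀ i, mink (e i) x ≤ 0})).Nonempty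

namespace HypPolyhedron

variable {n : ℕ} (P : HypPolyhedron n)

/-- The set of points of the polyhedron in the hyperboloid model. -/
def carrier : Set (Fin (n + 1) → ℝ) :=
  {x ∈ Hyperboloid n | ∀ i, mink (P.e i) x ≤ 0}

/-- `P̄`: the closure of the Klein-model image of the polyhedron in the closed unit ball. -/
def cl : Set (EuclideanSpace ℝ (Fin n)) :=
  closure (kleinMap '' P.carrier)

/-- The `k`-faces of `P`: the `k`-dimensional (nonempty) exposed faces of `P̄`. -/
def faces (k : ℕ) : Set (Set (EuclideanSpace ℝ (Fin n))) :=
  {F | IsExposed ℝ P.cl F ∧ F.Nonempty ∧ sdim F = k}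

/-- `a_k(P)`: the number of `k`-faces of `P`. -/
def a (k : ℕ) : ℕ := (P.faces k).ncard

/-- Vertices of `P`: the points of `0`-dimensional exposed faces of `P̄`. -/
def verts : Set (EuclideanSpace ℝ (Fin n)) :=
  {v | IsExposed ℝ P.cl {v}}

/-- Ideal vertices: vertices lying on the unit sphere. -/
def idealVerts : Set (EuclideanSpace ℝ (Fin n)) :=
  {v ∈ P.verts | ‖v‖ = 1}

/-- Finite vertices: vertices lying in the open unit ball. -/
def finiteVerts : Set (EuclideanSpace ℝ (Fin n)) :=
  {v ∈ P.verts | ‖v‖ < 1}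

/-- `v_∞(P)`: the number of ideal vertices of `P`. -/
def vInf : ℕ := P.idealVerts.ncard

/-- The bounding hyperplane `H_e` contains the face `F`. -/
def faceInHyperplane (e : Fin (n + 1) → ℝ) (F : Set (EuclideanSpace ℝ (Fin n))) : Prop :=
  ∀ x ∈ P.carrier, kleinMap x ∈ F → mink e x = 0

/-- `P` is right-angled: whenever two distinct bounding hyperplanes both contain an
`(n-2)`-dimensional face of `P`, the corresponding unit normals are orthogonal,
i.e. the dihedral angle is `π/2`. -/
def IsRightAngled : Prop :=
  ∀ i j : Fin P.m, i ≠ j →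
    (∃ F ∈ P.faces (n - 2), P.faceInHyperplane (P.e i) F ∧ P.faceInHyperplane (P.e j) F) →
    mink (P.e i) (P.e j) = 0

/-- `P` has finite volume: `P̄` is the convex hull of its (finitely many) vertices. -/
def FiniteVolume : Prop :=
  P.verts.Finite ∧ P.cl = convexHull ℝ P.verts

/-- `P` is compact: finite volume and all vertices are finite. -/
def IsCompactPoly : Prop :=
  P.FiniteVolume ∧ ∀ v ∈ P.verts, ‖v‖ < 1

/-- `P` is ideal: finite volume and all vertices are ideal. -/
def IsIdeal : Prop :=
  P.FiniteVolume ∧ ∀ v ∈ P.verts, ‖v‖ = 1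

end HypPolyhedron

/-- `ν(P) = a_{n-1}(P) + v_∞(P)` ranging over the family `𝒫ⁿ` of finite-volume non-compact
right-angled convex hyperbolic `n`-polyhedra. -/
def nuSet (n : ℕ) : Set ℕ :=
  {m | ∃ P : HypPolyhedron n,
        P.FiniteVolume ∧ P.IsRightAngled ∧ ¬ P.IsCompactPoly ∧ P.a (n - 1) + P.vInf = m}

/-- `νₙ = sInf {ν(P) : P ∈ 𝒫ⁿ}` (with `sInf ∅ = 0`). -/
def nu (n : ℕ) : ℕ := sInf (nuSet n)

/-!
Each facet contains at least `v'_∞(P)` ideal vertices, so it suffices that an ideal vertex `v` lies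
on at most `2(n - 1)` facets. The linear hyperplane orthogonal to the null vector `(1, v)` contains
the normals of these facets; modulo `(1, v)` it is isometric to the Euclidean space `vᗮ` of
dimension `n - 1`, in which a family of nonzero vectors with pairwise nonpositive inner products
has at most `2(n - 1)` members. That two facets have normals with nonpositive product even when
they are not adjacent is Andreev's theorem on polyhedra without obtuse dihedral angles.
-/

open scoped RealInnerProductSpace Topology

section VectorSpan

variable {E : Type*} [AddCommGroup E] [Module ℝ E] [TopologicalSpace E]

theorem vectorSpan_eq_of_eventually_mem [ContinuousAdd E] [ContinuousSMul ℝ E] {s : Set E}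
    {K : Submodule ℝ E} {z : E} (hs : ∀ p ∈ s, p - z ∈ K)
    (hloc : ∀ᶠ p in 𝓝 z, p - z ∈ K → p ∈ s) : vectorSpan ℝ s = K := by
  have hz : z ∈ s := hloc.self_of_nhds (by simp)
  apply le_antisymm
  · rw [vectorSpan_eq_span_vsub_set_right ℝ hz, Submodule.span_le]
    rintro _ ⟨p, hp, rfl⟩
    exact hs p hp
  · intro d hd
    have hline : ∀ᶠ t : ℝ in 𝓝 0, z + t • d ∈ s := by
      have hcont : Filter.Tendsto (fun t : ℝ => z + t • d) (𝓝 0) (𝓝 z) :=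
        Continuous.tendsto' (by fun_prop) _ _ (by simp)
      filter_upwards [hcont.eventually hloc] with t ht
      exact ht (by simpa using K.smul_mem t hd)
    obtain ⟨t, ht, ht0⟩ := (hline.filter_mono nhdsWithin_le_nhds).and
      (self_mem_nhdsWithin (s := Set.Ioi 0)) |>.exists
    have htd : t • d ∈ vectorSpan ℝ s := by simpa using vsub_mem_vectorSpan ℝ ht hz
    exact (Submodule.smul_mem_iff _ (ne_of_gt ht0)).1 htd

theorem mem_of_isExposed_of_sub_mem_vectorSpan {A B : Set E} (hB : IsExposed ℝ A B) {a p : E}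
    (ha : a ∈ B) (hp : p ∈ A) (hpa : p - a ∈ vectorSpan ℝ B) : p ∈ B := by
  obtain ⟨l, rfl⟩ := hB ⟨a, ha⟩
  have hker : vectorSpan ℝ {x ∈ A | ∀ y ∈ A, l y ≤ l x} ≤ l.ker := by
    rw [vectorSpan_def, Submodule.span_le]
    rintro _ ⟨b, hb, c, hc, rfl⟩
    simpa [sub_eq_zero] using le_antisymm (hc.2 b hb.1) (hb.2 c hc.1)
  have hl : l p = l a := by simpa [sub_eq_zero] using hker hpa
  exact ⟨hp, fun y hy => hl ▸ ha.2 y hy⟩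

end VectorSpan

section Convexity

theorem eq_of_isExposed_of_mem_interior {E : Type*} [NormedAddCommGroup E] [NormedSpace ℝ E]
    {A B : Set E} (hB : IsExposed ℝ A B) {x : E} (hxB : x ∈ B) (hxA : x ∈ interior A) : B = A := by
  obtain ⟨l, rfl⟩ := hB ⟨x, hxB⟩
  have hmax : IsLocalMax l x := by
    filter_upwards [mem_interior_iff_mem_nhds.1 hxA] with y hy using hxB.2 y hy
  simp [hmax.hasFDerivAt_eq_zero l.hasFDerivAt]

theorem exists_forall_neg_of_convexOn {ι E : Type*} [Finite ι] [Nonempty ι] [AddCommGroup E]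
    [Module ℝ E] {s : Set E} {f : ι → E → ℝ} (hf : ∀ i, ConvexOn ℝ s (f i))
    (hle : ∀ i, ∀ x ∈ s, f i x ≤ 0) (hlt : ∀ i, ∃ x ∈ s, f i x < 0) :
    ∃ x ∈ s, ∀ i, f i x < 0 := by
  cases nonempty_fintype ι
  choose p hp hneg using hlt
  let c : ℝ := (Fintype.card ι : ℝ)⁻¹
  have hc : 0 < c := by positivity
  have hsum : ∑ _i : ι, c = 1 := by simp [c]
  refine ⟨∑ j, c • p j, (hf (Classical.arbitrary ι)).1.sum_mem (fun _ _ => hc.le) hsum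
    fun j _ => hp j, fun i => ?_⟩
  calc f i (∑ j, c • p j)
      ≤ ∑ j, c • f i (p j) := (hf i).map_sum_le (fun _ _ => hc.le) hsum fun j _ => hp j
    _ < 0 := Finset.sum_neg' (fun j _ => mul_nonpos_of_nonneg_of_nonpos hc.le (hle i _ (hp j)))
        ⟨i, Finset.mem_univ i, mul_neg_of_pos_of_neg hc (hneg i)⟩

theorem exists_irredundant_subfamily {ι α : Type*} [Finite ι] (H : Set α) (C : ι → Set α) :
    ∃ S : Set ι, (∀ p ∈ H, (∀ l ∈ S, p ∈ C l) → ∀ l, p ∈ C l) ∧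
      ∀ k ∈ S, ∃ w ∈ H, (∀ l ∈ S, l ≠ k → w ∈ C l) ∧ w ∉ C k := by
  obtain ⟨S, hS⟩ := exists_minimal_of_wellFoundedLT
    (fun S : Set ι => ∀ p ∈ H, (∀ l ∈ S, p ∈ C l) → ∀ l, p ∈ C l)
    ⟨Set.univ, fun _ _ h l => h l (Set.mem_univ l)⟩
  refine ⟨S, hS.prop, fun k hk => ?_⟩
  have hdiff := hS.not_prop_of_lt (Set.sdiff_singleton_ssubset.2 hk)
  push Not at hdiff
  obtain ⟨w, hw, hwS, l, hl⟩ := hdiff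
  have hwS' : ∀ l ∈ S, l ≠ k → w ∈ C l := fun l hl hlk => hwS l ⟨hl, hlk⟩
  refine ⟨w, hw, hwS', fun hwk => hl (hS.prop w hw (fun r hr => ?_) l)⟩
  by_cases hrk : r = k
  exacts [hrk ▸ hwk, hwS' r hr hrk]

end Convexity

section InnerProductSpace

variable {V : Type*} [NormedAddCommGroup V] [InnerProductSpace ℝ V]

theorem finrank_orthogonal_singleton_add_one [FiniteDimensional ℝ V] {v : V} (hv : v ≠ 0) :
    Module.finrank ℝ (ℝ ∙ v)ᗮ + 1 = Module.finrank ℝ V := by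
  rw [← (ℝ ∙ v).finrank_add_finrank_orthogonal, finrank_span_singleton hv, add_comm]

theorem finrank_orthogonal_inf_orthogonal_add_two [FiniteDimensional ℝ V] {u v : V}
    (huv : LinearIndependent ℝ ![u, v]) :
    Module.finrank ℝ ((ℝ ∙ u)ᗮ ⊓ (ℝ ∙ v)ᗮ : Submodule ℝ V) + 2 = Module.finrank ℝ V := by
  have hspan := finrank_span_eq_card huv
  rw [Matrix.range_cons_cons_empty, Submodule.span_insert, Fintype.card_fin] at hspan
  rw [Submodule.inf_orthogonal, ← (ℝ ∙ u ⊔ ℝ ∙ v).finrank_add_finrank_orthogonal, hspan, add_comm]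

theorem inner_orthogonalProjectionOnto_orthogonal_singleton (a u v : V) :
    ⟪(ℝ ∙ a)ᗮ.orthogonalProjectionOnto u, (ℝ ∙ a)ᗮ.orthogonalProjectionOnto v⟫ =
      ⟪u, v⟫ - ⟪a, u⟫ * ⟪a, v⟫ / ‖a‖ ^ 2 := by
  rw [Submodule.inner_orthogonalProjectionOnto_eq_of_mem_left,
    Submodule.coe_orthogonalProjectionOnto_apply, Submodule.starProjection_orthogonal_val,
    Submodule.starProjection_singleton, inner_sub_left, real_inner_smul_left]
  simp only [Real.ringHom_apply]
  ring

theorem inner_pos_of_orthogonalProjectionOnto_eq_zero {a u v : V} (hu : u ≠ 0) (hv : v ≠ 0)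
    (hau : ⟪a, u⟫ ≤ 0) (hav : ⟪a, v⟫ ≤ 0) (hu0 : (ℝ ∙ a)ᗮ.orthogonalProjectionOnto u = 0)
    (hv0 : (ℝ ∙ a)ᗮ.orthogonalProjectionOnto v = 0) : 0 < ⟪u, v⟫ := by
  have hne : ∀ {w : V}, w ≠ 0 → (ℝ ∙ a)ᗮ.orthogonalProjectionOnto w = 0 → ⟪a, w⟫ ≠ 0 := by
    intro w hw hw0 haw
    have hww := inner_orthogonalProjectionOnto_orthogonal_singleton a w w
    rw [hw0, inner_zero_left, haw, zero_mul, zero_div, sub_zero] at hww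
    exact hw (inner_self_eq_zero.1 hww.symm)
  have ha : a ≠ 0 := fun ha => hne hu hu0 (by rw [ha, inner_zero_left])
  have huv := inner_orthogonalProjectionOnto_orthogonal_singleton a u v
  rw [hu0, inner_zero_left, eq_comm, sub_eq_zero] at huv
  rw [huv]
  exact div_pos (mul_pos_of_neg_of_neg (hau.lt_of_ne (hne hu hu0)) (hav.lt_of_ne (hne hv hv0)))
    (by positivity)

theorem card_le_two_mul_finrank_of_inner_nonpos [FiniteDimensional ℝ V] {ι : Type*}
    (S : Finset ι) (u : ι → V) (hu : ∀ s ∈ S, u s ≠ 0)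
    (hS : (S : Set ι).Pairwise fun s t => ⟪u s, u t⟫ ≤ 0) :
    S.card ≤ 2 * Module.finrank ℝ V := by
  classical
  induction hd : Module.finrank ℝ V generalizing V S with
  | zero =>
    have := Module.finrank_zero_iff.1 hd
    simp [Finset.eq_empty_of_forall_notMem fun s hs => hu s hs (Subsingleton.elim _ _)]
  | succ d ih =>
    obtain rfl | ⟨a, ha⟩ := S.eq_empty_or_nonempty
    · simp
    let π := (ℝ ∙ u a)ᗮ.orthogonalProjectionOnto
    have hfinrank : Module.finrank ℝ (ℝ ∙ u a)ᗮ = d := by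
      have := finrank_orthogonal_singleton_add_one (hu a ha)
      omega
    have hle : ∀ s ∈ S.erase a, ⟪u a, u s⟫ ≤ 0 := fun s hs =>
      hS ha (Finset.mem_of_mem_erase hs) (Finset.ne_of_mem_erase hs).symm
    have hnonzero : ((S.erase a).filter fun s => π (u s) ≠ 0).card ≤ 2 * d := by
      refine ih _ (fun s => π (u s)) (fun s hs => (Finset.mem_filter.1 hs).2)
        (fun s hs t ht hst => ?_) hfinrank
      have hs' := (Finset.mem_filter.1 hs).1
      have ht' := (Finset.mem_filter.1 ht).1
      have hst' : ⟪u s, u t⟫ ≤ 0 :=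
        hS (Finset.mem_of_mem_erase hs') (Finset.mem_of_mem_erase ht') hst
      exact (inner_orthogonalProjectionOnto_orthogonal_singleton (u a) (u s) (u t)).trans_le <|
        sub_nonpos_of_le <| hst'.trans <|
        div_nonneg (mul_nonneg_of_nonpos_of_nonpos (hle s hs') (hle t ht')) (sq_nonneg _)
    have hzero : ((S.erase a).filter fun s => ¬ π (u s) ≠ 0).card ≤ 1 := by
      refine Finset.card_le_one.2 fun s hs t ht => ?_
      simp only [Finset.mem_filter, not_not] at hs ht
      have hsS := Finset.mem_of_mem_erase hs.1
      have htS := Finset.mem_of_mem_erase ht.1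
      by_contra hst
      exact (hS hsS htS hst).not_gt <| inner_pos_of_orthogonalProjectionOnto_eq_zero (hu s hsS)
        (hu t htS) (hle s hs.1) (hle t ht.1) hs.2 ht.2
    have hsplit := Finset.card_filter_add_card_filter_not (s := S.erase a) fun s => π (u s) ≠ 0
    have herase := Finset.card_erase_add_one ha
    omega

end InnerProductSpace

section KleinModel

variable {n : ℕ}

/-- The spatial part `(x₁, …, xₙ)` of a vector of `ℝ^{n+1}`. -/
def spatial (x : Fin (n + 1) → ℝ) : EuclideanSpace ℝ (Fin n) :=
  WithLp.toLp 2 fun i => x i.succ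

/-- The affine function `p ↦ ⟨e, (1, p)⟩` on the Klein model, which has the sign of `⟨e, ·⟩` on the
hyperboloid; the hyperplane `H_e` is its zero set. -/
def height (e : Fin (n + 1) → ℝ) (p : EuclideanSpace ℝ (Fin n)) : ℝ :=
  ⟪spatial e, p⟫ - e 0

theorem mink_eq_inner_spatial_sub (x y : Fin (n + 1) → ℝ) :
    mink x y = ⟪spatial x, spatial y⟫ - x 0 * y 0 := by
  simp only [mink, spatial, PiLp.inner_apply, RCLike.inner_apply, conj_trivial, mul_comm]
  ring

theorem kleinMap_eq_smul_spatial (x : Fin (n + 1) → ℝ) : kleinMap x = (x 0)⁻¹ • spatial x := by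
  ext i
  simp [kleinMap, spatial, div_eq_inv_mul]

theorem mink_eq_mul_height_kleinMap (e : Fin (n + 1) → ℝ) {x : Fin (n + 1) → ℝ} (hx : x 0 ≠ 0) :
    mink e x = x 0 * height e (kleinMap x) := by
  rw [mink_eq_inner_spatial_sub, height, kleinMap_eq_smul_spatial, real_inner_smul_right]
  field_simp

theorem spatial_ne_zero_of_mink_self_pos {e : Fin (n + 1) → ℝ} (he : 0 < mink e e) :
    spatial e ≠ 0 := by
  intro h
  rw [mink_eq_inner_spatial_sub, h, inner_zero_left] at he
  linarith [mul_self_nonneg (e 0)]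

@[fun_prop]
theorem continuous_height (e : Fin (n + 1) → ℝ) : Continuous (height e) := by
  unfold height
  fun_prop

theorem height_combo (e : Fin (n + 1) → ℝ) (x y : EuclideanSpace ℝ (Fin n)) {a b : ℝ}
    (hab : a + b = 1) : height e (a • x + b • y) = a * height e x + b * height e y := by
  simp only [height, inner_add_right, real_inner_smul_right]
  linear_combination e 0 * hab

theorem inner_spatial_sub (e : Fin (n + 1) → ℝ) (x y : EuclideanSpace ℝ (Fin n)) :
    ⟪spatial e, x - y⟫ = height e x - height e y := by
  simp only [height, inner_sub_right]
  ring

theorem sub_mem_orthogonal_spatial_iff {e : Fin (n + 1) → ℝ} {x y : EuclideanSpace ℝ (Fin n)} :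
    x - y ∈ (ℝ ∙ spatial e)ᗮ ↔ height e x = height e y := by
  rw [Submodule.mem_orthogonal_singleton_iff_inner_right, inner_spatial_sub, sub_eq_zero]

theorem convexOn_height (e : Fin (n + 1) → ℝ) {s : Set (EuclideanSpace ℝ (Fin n))}
    (hs : Convex ℝ s) : ConvexOn ℝ s (height e) :=
  ⟨hs, fun x _ y _ _ _ _ _ hab => (height_combo e x y hab).le⟩

theorem exists_combo_height_eq_zero {e : Fin (n + 1) → ℝ} {x y : EuclideanSpace ℝ (Fin n)}
    (hx : height e x < 0) (hy : 0 < height e y) :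
    ∃ a b : ℝ, 0 < a ∧ 0 < b ∧ a + b = 1 ∧ height e (a • x + b • y) = 0 := by
  have hd : 0 < height e y - height e x := by linarith
  have hab : height e y / (height e y - height e x) + -height e x / (height e y - height e x) = 1 :=
    by field_simp; ring
  refine ⟨_, _, div_pos hy hd, div_pos (neg_pos.2 hx) hd, hab, ?_⟩
  rw [height_combo e x y hab]
  field_simp
  ring

theorem linearIndependent_spatial {e f : Fin (n + 1) → ℝ} (he : 0 < mink e e)
    {x y : EuclideanSpace ℝ (Fin n)} (hxy : height e x = height e y)
    (hne : height f x ≠ height f y) : LinearIndependent ℝ ![spatial e, spatial f] := by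
  refine (LinearIndependent.pair_iff' (spatial_ne_zero_of_mink_self_pos he)).2 fun a haf => hne ?_
  rw [← sub_eq_zero, ← inner_spatial_sub, ← haf, real_inner_smul_left, inner_spatial_sub, hxy,
    sub_self, mul_zero]

theorem norm_kleinMap_lt_one {x : Fin (n + 1) → ℝ} (hx : mink x x < 0) (h0 : 0 < x 0) :
    ‖kleinMap x‖ < 1 := by
  rw [mink_eq_inner_spatial_sub, real_inner_self_eq_norm_sq] at hx
  rw [kleinMap_eq_smul_spatial, norm_smul, norm_inv, Real.norm_of_nonneg h0.le, inv_mul_lt_one₀ h0]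
  nlinarith [norm_nonneg (spatial x)]

theorem exists_mem_hyperboloid_kleinMap_eq {p : EuclideanSpace ℝ (Fin n)} (hp : ‖p‖ < 1) :
    ∃ x ∈ Hyperboloid n, kleinMap x = p := by
  have hpos : 0 < 1 - ‖p‖ ^ 2 := by nlinarith [norm_nonneg p]
  set c : ℝ := (√(1 - ‖p‖ ^ 2))⁻¹ with hc
  have hc0 : 0 < c := inv_pos.2 (Real.sqrt_pos.2 hpos)
  have hc2 : c ^ 2 * (1 - ‖p‖ ^ 2) = 1 := by
    rw [hc, inv_pow, Real.sq_sqrt hpos.le, inv_mul_cancel₀ hpos.ne']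
  have hs : spatial (c • (Fin.cons 1 p.ofLp : Fin (n + 1) → ℝ)) = c • p := by
    ext i
    simp [spatial]
  refine ⟨c • Fin.cons 1 p.ofLp, ⟨?_, by simpa using hc0⟩, ?_⟩
  · rw [mink_eq_inner_spatial_sub, hs, real_inner_smul_left, real_inner_smul_right,
      real_inner_self_eq_norm_sq]
    simp only [Pi.smul_apply, Fin.cons_zero, smul_eq_mul]
    linarith
  · rw [kleinMap_eq_smul_spatial, hs]
    simp [smul_smul, inv_mul_cancel₀ hc0.ne']

theorem pos_of_mink_self_neg_of_height_neg {x : Fin (n + 1) → ℝ} (hx : mink x x < 0)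
    {y : EuclideanSpace ℝ (Fin n)} (hy : ‖y‖ ≤ 1) (hxy : height x y < 0) : 0 < x 0 := by
  by_contra! h0
  rw [mink_eq_inner_spatial_sub, real_inner_self_eq_norm_sq] at hx
  have hnorm : ‖spatial x‖ < -x 0 := lt_of_pow_lt_pow_left₀ 2 (by linarith) (by linarith)
  have hinner : -(‖spatial x‖ * ‖y‖) ≤ ⟪spatial x, y⟫ :=
    (abs_le.1 (abs_real_inner_le_norm (spatial x) y)).1
  have hle : ‖spatial x‖ * ‖y‖ ≤ ‖spatial x‖ := mul_le_of_le_one_right (norm_nonneg _) hy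
  rw [height] at hxy
  linarith

/-- The orthogonal projection of `(1, y)` to the linear hyperplane `⟨e, ·⟩ = 0`, for a unit
normal `e`; it represents the hyperbolic projection of `y` to `H_e`. -/
def minkProj (e : Fin (n + 1) → ℝ) (y : EuclideanSpace ℝ (Fin n)) : Fin (n + 1) → ℝ :=
  Fin.cons 1 y.ofLp - height e y • e

theorem spatial_minkProj (e : Fin (n + 1) → ℝ) (y : EuclideanSpace ℝ (Fin n)) :
    spatial (minkProj e y) = y - height e y • spatial e := by
  ext i
  simp [minkProj, spatial]

theorem mink_minkProj (f e : Fin (n + 1) → ℝ) (y : EuclideanSpace ℝ (Fin n)) :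
    mink f (minkProj e y) = height f y - height e y * mink e f := by
  have h0 : minkProj e y 0 = 1 - height e y * e 0 := by simp [minkProj]
  rw [mink_eq_inner_spatial_sub, mink_eq_inner_spatial_sub, spatial_minkProj, h0, inner_sub_right,
    real_inner_smul_right, real_inner_comm (spatial f) (spatial e)]
  simp only [height]
  ring

theorem height_minkProj_self (e : Fin (n + 1) → ℝ) (y : EuclideanSpace ℝ (Fin n)) :
    height (minkProj e y) y = ‖y‖ ^ 2 - 1 - height e y ^ 2 := by
  rw [height, spatial_minkProj, inner_sub_left, real_inner_smul_left, real_inner_self_eq_norm_sq]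
  simp only [minkProj, height, Pi.sub_apply, Fin.cons_zero, Pi.smul_apply, smul_eq_mul]
  ring

theorem mink_minkProj_self {e : Fin (n + 1) → ℝ} (he : mink e e = 1)
    (y : EuclideanSpace ℝ (Fin n)) :
    mink (minkProj e y) (minkProj e y) = height (minkProj e y) y := by
  have hcomm : mink e (minkProj e y) = 0 := by rw [mink_minkProj, he, mul_one, sub_self]
  rw [mink_minkProj, hcomm, mul_zero, sub_zero]

theorem exists_height_eq_zero_forall_mul_height_eq {e : Fin (n + 1) → ℝ} (he : mink e e = 1)
    {y : EuclideanSpace ℝ (Fin n)} (hy : ‖y‖ < 1) :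
    ∃ q, ‖q‖ < 1 ∧ height e q = 0 ∧
      ∃ c > 0, ∀ f, c * height f q = height f y - height e y * mink e f := by
  have hneg : height (minkProj e y) y < 0 := by
    rw [height_minkProj_self]
    nlinarith [norm_nonneg y, sq_nonneg (height e y)]
  have htime : mink (minkProj e y) (minkProj e y) < 0 := by rwa [mink_minkProj_self he]
  have hpos : 0 < minkProj e y 0 := pos_of_mink_self_neg_of_height_neg htime hy.le hneg
  have hheight : ∀ f, minkProj e y 0 * height f (kleinMap (minkProj e y)) =
      height f y - height e y * mink e f := fun f => by
    rw [← mink_eq_mul_height_kleinMap f hpos.ne', mink_minkProj]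
  refine ⟨_, norm_kleinMap_lt_one htime hpos, ?_, _, hpos, hheight⟩
  have := hheight e
  rw [he, mul_one, sub_self] at this
  exact (mul_eq_zero.1 this).resolve_left hpos.ne'

theorem card_le_of_mink_nonpos_of_height_eq_zero {ι : Type*} [Fintype ι]
    (e : ι → Fin (n + 1) → ℝ) (hpos : ∀ s, 0 < mink (e s) (e s))
    (hnonpos : Pairwise fun s t => mink (e s) (e t) ≤ 0) {v : EuclideanSpace ℝ (Fin n)}
    (hv : ‖v‖ = 1) (hev : ∀ s, height (e s) v = 0) : Fintype.card ι ≤ 2 * (n - 1) := by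
  have hfinrank := finrank_orthogonal_singleton_add_one (norm_ne_zero_iff.1 (hv ▸ one_ne_zero))
  rw [finrank_euclideanSpace_fin] at hfinrank
  let π := (ℝ ∙ v)ᗮ.orthogonalProjectionOnto
  have hinner : ∀ s t, ⟪π (spatial (e s)), π (spatial (e t))⟫ = mink (e s) (e t) := fun s t => by
    have hv0 : ∀ r, ⟪v, spatial (e r)⟫ = e r 0 := fun r => by
      rw [real_inner_comm, ← sub_eq_zero]
      exact hev r
    rw [inner_orthogonalProjectionOnto_orthogonal_singleton, hv0, hv0, hv,
      mink_eq_inner_spatial_sub]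
    ring
  have hcard := card_le_two_mul_finrank_of_inner_nonpos Finset.univ (fun s => π (spatial (e s)))
    (fun s _ => inner_self_ne_zero.1 (hinner s s ▸ (hpos s).ne'))
    fun s _ t _ hst => (hinner s t).trans_le (hnonpos hst)
  rw [Finset.card_univ] at hcard
  omega

end KleinModel

namespace HypPolyhedron

variable {n : ℕ} {P : HypPolyhedron n}

theorem kleinMap_image_carrier :
    kleinMap '' P.carrier = {p | ‖p‖ < 1 ∧ ∀ k, height (P.e k) p ≤ 0} := by
  ext p
  constructor
  · rintro ⟨x, ⟨⟨hx, h0⟩, hk⟩, rfl⟩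
    refine ⟨norm_kleinMap_lt_one (by linarith) h0, fun k => ?_⟩
    exact nonpos_of_mul_nonpos_right (mink_eq_mul_height_kleinMap _ h0.ne' ▸ hk k) h0
  · rintro ⟨hp, hk⟩
    obtain ⟨x, hx, rfl⟩ := exists_mem_hyperboloid_kleinMap_eq hp
    refine ⟨x, ⟨hx, fun k => ?_⟩, rfl⟩
    rw [mink_eq_mul_height_kleinMap _ hx.2.ne']
    exact mul_nonpos_of_nonneg_of_nonpos hx.2.le (hk k)

theorem mem_cl_of_norm_lt_one {p : EuclideanSpace ℝ (Fin n)} (hp : ‖p‖ < 1)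
    (h : ∀ k, height (P.e k) p ≤ 0) : p ∈ P.cl :=
  subset_closure (kleinMap_image_carrier ▸ ⟨hp, h⟩)

theorem norm_le_one_of_mem_cl {p : EuclideanSpace ℝ (Fin n)} (hp : p ∈ P.cl) : ‖p‖ ≤ 1 :=
  closure_minimal (kleinMap_image_carrier ▸ fun _ hq => hq.1.le)
    (isClosed_le continuous_norm continuous_const) hp

theorem height_nonpos_of_mem_cl {p : EuclideanSpace ℝ (Fin n)} (hp : p ∈ P.cl) (k : Fin P.m) :
    height (P.e k) p ≤ 0 :=
  closure_minimal (kleinMap_image_carrier ▸ fun _ hq => hq.2 k)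
    (isClosed_le (continuous_height _) continuous_const) hp

theorem convex_cl : Convex ℝ P.cl := by
  refine Convex.closure ?_
  rw [kleinMap_image_carrier]
  simp only [Set.ofPred_and, Set.ofPred_forall]
  refine Convex.inter ?_ (convex_iInter fun k => ?_)
  · simpa using (convexOn_univ_norm (E := EuclideanSpace ℝ (Fin n))).convex_lt 1
  · simpa using (convexOn_height (P.e k) convex_univ).convex_le 0

theorem mem_interior_cl {x : EuclideanSpace ℝ (Fin n)} (hx : ‖x‖ < 1)
    (hneg : ∀ l, height (P.e l) x < 0) : x ∈ interior P.cl := by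
  rw [mem_interior_iff_mem_nhds]
  filter_upwards [continuous_norm.continuousAt.eventually_lt_const hx, Filter.eventually_all.2
    fun l => (continuous_height (P.e l)).continuousAt.eventually_lt_const (hneg l)] with p hp hl
  exact mem_cl_of_norm_lt_one hp fun l => (hl l).le

/-- The part of `P̄` in the `i`-th bounding hyperplane. It is an exposed face of any dimension, and
different indices may give the same wall. -/
def wall (P : HypPolyhedron n) (i : Fin P.m) : Set (EuclideanSpace ℝ (Fin n)) :=
  {p ∈ P.cl | height (P.e i) p = 0}

/-- The points of `ℍⁿ` in the `i`-th bounding hyperplane at which every constraint of `P` is strict,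
apart from those that vanish on the whole hyperplane: the interior of the wall relative to the
hyperplane. -/
def wallInterior (P : HypPolyhedron n) (i : Fin P.m) : Set (EuclideanSpace ℝ (Fin n)) :=
  {x | ‖x‖ < 1 ∧ height (P.e i) x = 0 ∧
    ∀ l, height (P.e l) x < 0 ∨ ∀ p, height (P.e i) p = 0 → height (P.e l) p = 0}

theorem wallInterior_subset_wall (i : Fin P.m) : P.wallInterior i ⊆ P.wall i :=
  fun x ⟨hx, hxi, hxl⟩ =>
    ⟨mem_cl_of_norm_lt_one hx fun l => (hxl l).elim le_of_lt fun h => (h x hxi).le, hxi⟩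

theorem isExposed_wall (i : Fin P.m) : IsExposed ℝ P.cl (P.wall i) := by
  rintro ⟨z, hz, hzi⟩
  refine ⟨innerSL ℝ (spatial (P.e i)), Set.ext fun p => and_congr_right fun hp => ?_⟩
  have hmax : ∀ y, innerSL ℝ (spatial (P.e i)) y ≤ innerSL ℝ (spatial (P.e i)) p ↔
      height (P.e i) y ≤ height (P.e i) p := fun y => by
    simp only [innerSL_apply_apply, height, sub_le_sub_iff_right]
  simp only [hmax]
  exact ⟨fun hpi y hy => hpi ▸ height_nonpos_of_mem_cl hy i, fun h =>
    le_antisymm (height_nonpos_of_mem_cl hp i) (hzi ▸ h z hz)⟩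

theorem faceInHyperplane_of_subset_wall {F : Set (EuclideanSpace ℝ (Fin n))} {i : Fin P.m}
    (hF : F ⊆ P.wall i) : P.faceInHyperplane (P.e i) F := fun x hx hxF => by
  rw [mink_eq_mul_height_kleinMap _ hx.1.2.ne', (hF hxF).2, mul_zero]

theorem wall_inter_wall_mem_faces {i k : Fin P.m} {z : EuclideanSpace ℝ (Fin n)}
    (hik : LinearIndependent ℝ ![spatial (P.e i), spatial (P.e k)])
    (hzi : height (P.e i) z = 0) (hzk : height (P.e k) z = 0)
    (hloc : ∀ᶠ p in 𝓝 z, height (P.e i) p = 0 → height (P.e k) p = 0 → p ∈ P.cl) :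
    P.wall i ∩ P.wall k ∈ P.faces (n - 2) := by
  have hzcl : z ∈ P.cl := hloc.self_of_nhds hzi hzk
  have hmem : ∀ p, p - z ∈ (ℝ ∙ spatial (P.e i))ᗮ ⊓ (ℝ ∙ spatial (P.e k))ᗮ ↔
      height (P.e i) p = 0 ∧ height (P.e k) p = 0 := fun p => by
    rw [Submodule.mem_inf, sub_mem_orthogonal_spatial_iff, sub_mem_orthogonal_spatial_iff, hzi, hzk]
  have hspan : vectorSpan ℝ (P.wall i ∩ P.wall k) =
      (ℝ ∙ spatial (P.e i))ᗮ ⊓ (ℝ ∙ spatial (P.e k))ᗮ := by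
    refine vectorSpan_eq_of_eventually_mem (fun p hp => (hmem p).2 ⟨hp.1.2, hp.2.2⟩) ?_
    filter_upwards [hloc] with p hp hpK
    obtain ⟨hpi, hpk⟩ := (hmem p).1 hpK
    exact ⟨⟨hp hpi hpk, hpi⟩, hp hpi hpk, hpk⟩
  refine ⟨(isExposed_wall i).inter (isExposed_wall k), ⟨z, ⟨hzcl, hzi⟩, hzcl, hzk⟩, ?_⟩
  have hfinrank := finrank_orthogonal_inf_orthogonal_add_two hik
  rw [finrank_euclideanSpace_fin] at hfinrank
  rw [sdim, hspan]
  omega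

/-- In an irredundant description of the wall inside its hyperplane, some constraint `k` is violated
at `q`. Dropping it lets in a point `w` beyond `k` alone, and the segment from `x` to `w` crosses
the `k`-th hyperplane in the relative interior of an `(n - 2)`-face. -/
theorem exists_adjacent_wall {i j : Fin P.m} {x q : EuclideanSpace ℝ (Fin n)}
    (hx : x ∈ P.wallInterior i) (hq : ‖q‖ < 1) (hqi : height (P.e i) q = 0)
    (hqj : 0 < height (P.e j) q) :
    ∃ k, 0 < height (P.e k) q ∧ P.wall i ∩ P.wall k ∈ P.faces (n - 2) := by
  obtain ⟨hx1, hxi, hxl⟩ := hx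
  obtain ⟨S, hS, hirr⟩ := exists_irredundant_subfamily {p | ‖p‖ < 1 ∧ height (P.e i) p = 0}
    fun l => {p | height (P.e l) p ≤ 0}
  obtain ⟨k, hkS, hqk⟩ : ∃ k ∈ S, 0 < height (P.e k) q := by
    by_contra! h
    exact hqj.not_ge (hS q ⟨hq, hqi⟩ h j)
  obtain ⟨w, ⟨hw1, hwi⟩, hwS, hwk⟩ := hirr k hkS
  have hxk : height (P.e k) x < 0 := (hxl k).resolve_right fun h => hqk.ne' (h q hqi)
  obtain ⟨a, b, ha, hb, hab, hzk⟩ := exists_combo_height_eq_zero hxk (not_le.1 hwk)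
  set z := a • x + b • w with hz
  have hz1 : ‖z‖ < 1 := by
    simpa using convex_ball (0 : EuclideanSpace ℝ (Fin n)) 1 (by simpa using hx1)
      (by simpa using hw1) ha.le hb.le hab
  have hzi : height (P.e i) z = 0 := by rw [hz, height_combo _ _ _ hab, hxi, hwi]; ring
  have hlocS : ∀ l ∈ S, ∀ᶠ p in 𝓝 z,
      height (P.e i) p = 0 → height (P.e k) p = 0 → height (P.e l) p ≤ 0 := by
    intro l hlS
    by_cases hlk : l = k
    · exact .of_forall fun p _ hpk => hlk ▸ hpk.le
    rcases hxl l with hneg | hzero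
    · have hzl : height (P.e l) z < 0 := by
        rw [hz, height_combo _ _ _ hab]
        exact add_neg_of_neg_of_nonpos (mul_neg_of_pos_of_neg ha hneg)
          (mul_nonpos_of_nonneg_of_nonpos hb.le (hwS l hlS hlk))
      filter_upwards [(continuous_height (P.e l)).continuousAt.eventually_lt_const hzl]
        with p hp _ _ using hp.le
    · exact .of_forall fun p hpi _ => (hzero p hpi).le
  refine ⟨k, hqk, wall_inter_wall_mem_faces (linearIndependent_spatial
    (P.unit i ▸ one_pos) (hqi.trans hxi.symm) (hxk.trans hqk).ne') hzi hzk ?_⟩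
  filter_upwards [continuous_norm.continuousAt.eventually_lt_const hz1,
    (Filter.eventually_all_finite S.toFinite).2 hlocS] with p hp1 hpS hpi hpk
  exact mem_cl_of_norm_lt_one hp1 (hS p ⟨hp1, hpi⟩ fun l hl => hpS l hl hpi hpk)

/-- All dihedral angles are at most `π/2`. The `e i` are outer normals, so the dihedral angle `α`
between the hyperplanes of `e i` and `e j` satisfies `cos α = -⟨e i, e j⟩`. -/
def IsNonobtuse (P : HypPolyhedron n) : Prop :=
  ∀ i j : Fin P.m, i ≠ j →
    (∃ F ∈ P.faces (n - 2), P.faceInHyperplane (P.e i) F ∧ P.faceInHyperplane (P.e j) F) →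
    mink (P.e i) (P.e j) ≤ 0

theorem IsRightAngled.isNonobtuse (hP : P.IsRightAngled) : P.IsNonobtuse :=
  fun i j hij hF => (hP i j hij hF).le

/-- If `⟨e i, e j⟩` were positive, projecting `y` to the hyperplane of `e i` would increase the
height over `e j` but no height over a wall adjacent to the `i`-th one. -/
theorem IsNonobtuse.mink_nonpos (hP : P.IsNonobtuse) {i j : Fin P.m}
    {x y : EuclideanSpace ℝ (Fin n)} (hx : x ∈ P.wallInterior i) (hy : ‖y‖ < 1)
    (hyj : y ∈ P.wall j) (hyi : height (P.e i) y < 0) : mink (P.e i) (P.e j) ≤ 0 := by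
  by_contra! hij
  obtain ⟨q, hq, hqi, c, hc, hproj⟩ := exists_height_eq_zero_forall_mul_height_eq (P.unit i) hy
  have hqj : 0 < height (P.e j) q := by
    refine pos_of_mul_pos_right ?_ hc.le
    rw [hproj, hyj.2, zero_sub, neg_pos]
    exact mul_neg_of_neg_of_pos hyi hij
  obtain ⟨k, hqk, hface⟩ := exists_adjacent_wall hx hq hqi hqj
  have hik : i ≠ k := by
    rintro rfl
    exact hqk.ne' hqi
  have hadj : mink (P.e i) (P.e k) ≤ 0 := hP i k hik
    ⟨_, hface, faceInHyperplane_of_subset_wall Set.inter_subset_left,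
      faceInHyperplane_of_subset_wall Set.inter_subset_right⟩
  refine hqk.not_ge (nonpos_of_mul_nonpos_right ?_ hc)
  rw [hproj]
  exact sub_nonpos_of_le ((height_nonpos_of_mem_cl hyj.1 k).trans
    (mul_nonneg_of_nonpos_of_nonpos hyi.le hadj))

section Facets

variable {F : Set (EuclideanSpace ℝ (Fin n))}

theorem vectorSpan_facet_eq_orthogonal (hF : F ∈ P.faces (n - 1)) {i : Fin P.m}
    (hFi : ∀ p ∈ F, height (P.e i) p = 0) : vectorSpan ℝ F = (ℝ ∙ spatial (P.e i))ᗮ := by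
  refine Submodule.eq_of_le_of_finrank_eq ?_ ?_
  · rw [vectorSpan_def, Submodule.span_le]
    rintro _ ⟨p, hp, q, hq, rfl⟩
    exact sub_mem_orthogonal_spatial_iff.2 ((hFi p hp).trans (hFi q hq).symm)
  · have hfinrank := finrank_orthogonal_singleton_add_one
      (spatial_ne_zero_of_mink_self_pos (P.unit i ▸ one_pos))
    rw [finrank_euclideanSpace_fin] at hfinrank
    have hdim : Module.finrank ℝ (vectorSpan ℝ F) = n - 1 := hF.2.2
    omega

theorem facet_eq_wall (hF : F ∈ P.faces (n - 1)) {i : Fin P.m}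
    (hFi : ∀ p ∈ F, height (P.e i) p = 0) : F = P.wall i := by
  obtain ⟨a, ha⟩ := hF.2.1
  refine Set.Subset.antisymm (fun p hp => ⟨hF.1.subset hp, hFi p hp⟩) fun p hp => ?_
  refine mem_of_isExposed_of_sub_mem_vectorSpan hF.1 ha hp.1 ?_
  rw [vectorSpan_facet_eq_orthogonal hF hFi, sub_mem_orthogonal_spatial_iff, hp.2, hFi a ha]

theorem exists_mem_facet_norm_lt_one (hn : 2 ≤ n) (hF : F ∈ P.faces (n - 1)) :
    ∃ x ∈ F, ‖x‖ < 1 := by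
  have hnontrivial : F.Nontrivial := by
    by_contra h
    have hdim := hF.2.2
    rw [sdim, vectorSpan_of_subsingleton ℝ (Set.not_nontrivial_iff.1 h), finrank_bot] at hdim
    omega
  obtain ⟨a, ha, b, hb, hab⟩ := hnontrivial
  exact ⟨(1 / 2 : ℝ) • a + (1 / 2 : ℝ) • b,
    hF.1.convex convex_cl ha hb (by norm_num) (by norm_num) (by norm_num),
    norm_combo_lt_of_ne (norm_le_one_of_mem_cl (hF.1.subset ha))
      (norm_le_one_of_mem_cl (hF.1.subset hb)) hab (by norm_num) (by norm_num) (by norm_num)⟩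

theorem exists_mem_facet_forall_strict (hn : 2 ≤ n) (hF : F ∈ P.faces (n - 1)) :
    ∃ x ∈ F, ‖x‖ < 1 ∧ ∀ l, height (P.e l) x < 0 ∨ ∀ p ∈ F, height (P.e l) p = 0 := by
  classical
  have hconv : Convex ℝ F := hF.1.convex convex_cl
  let f : Option {l // ∃ p ∈ F, height (P.e l) p < 0} → EuclideanSpace ℝ (Fin n) → ℝ
    | none => fun p => ‖p‖ - 1
    | some l => height (P.e l)
  obtain ⟨x, hx, hxf⟩ : ∃ x ∈ F, ∀ l, f l x < 0 := by
    refine exists_forall_neg_of_convexOn ?_ ?_ ?_ <;> rintro (_ | ⟨l, hl⟩)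
    · exact (convexOn_norm hconv).add_const (-1)
    · exact convexOn_height (P.e l) hconv
    · exact fun p hp => sub_nonpos.2 (norm_le_one_of_mem_cl (hF.1.subset hp))
    · exact fun p hp => height_nonpos_of_mem_cl (hF.1.subset hp) l
    · simpa [f] using exists_mem_facet_norm_lt_one hn hF
    · exact hl
  refine ⟨x, hx, sub_neg.1 (hxf none), fun l => ?_⟩
  by_cases hl : ∃ p ∈ F, height (P.e l) p < 0
  · exact .inl (hxf (some ⟨l, hl⟩))
  · push Not at hl
    exact .inr fun p hp => le_antisymm (height_nonpos_of_mem_cl (hF.1.subset hp) l) (hl p hp)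

theorem facet_disjoint_interior_cl (hn : 1 ≤ n) (hF : F ∈ P.faces (n - 1)) :
    Disjoint F (interior P.cl) := by
  refine Set.disjoint_left.2 fun x hxF hx => ?_
  have htop : vectorSpan ℝ F = ⊤ := by
    rw [eq_of_isExposed_of_mem_interior hF.1 hxF hx]
    refine vectorSpan_eq_of_eventually_mem (z := x) (fun _ _ => trivial) ?_
    filter_upwards [mem_interior_iff_mem_nhds.1 hx] with p hp _ using hp
  have hdim := hF.2.2
  rw [sdim, htop, finrank_top, finrank_euclideanSpace_fin] at hdim
  omega

theorem exists_facet_eq_wall (hn : 2 ≤ n) (hF : F ∈ P.faces (n - 1)) :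
    ∃ i, F = P.wall i ∧ (P.wallInterior i).Nonempty := by
  obtain ⟨x, hxF, hx1, hxl⟩ := exists_mem_facet_forall_strict hn hF
  obtain ⟨i, hi⟩ : ∃ i, ∀ p ∈ F, height (P.e i) p = 0 := by
    by_contra hnone
    push Not at hnone
    have hneg : ∀ l, height (P.e l) x < 0 := fun l => (hxl l).resolve_right (by
      push Not
      exact hnone l)
    exact (facet_disjoint_interior_cl (by omega) hF).le_bot ⟨hxF, mem_interior_cl hx1 hneg⟩
  refine ⟨i, facet_eq_wall hF hi, x, hx1, hi x hxF, fun l => (hxl l).imp_right fun hl p hp => ?_⟩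
  rw [← hl x hxF, ← sub_mem_orthogonal_spatial_iff, ← vectorSpan_facet_eq_orthogonal hF hl,
    vectorSpan_facet_eq_orthogonal hF hi, sub_mem_orthogonal_spatial_iff, hp, hi x hxF]

theorem finite_facets (hn : 2 ≤ n) : (P.faces (n - 1)).Finite :=
  (Set.finite_range P.wall).subset fun _ hF =>
    let ⟨i, hi, _⟩ := exists_facet_eq_wall hn hF
    ⟨i, hi.symm⟩

theorem IsNonobtuse.mink_nonpos_of_wall_ne (hP : P.IsNonobtuse) {i j : Fin P.m}
    (hi : (P.wallInterior i).Nonempty) (hj : (P.wallInterior j).Nonempty)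
    (hjF : P.wall j ∈ P.faces (n - 1)) (hij : P.wall i ≠ P.wall j) :
    mink (P.e i) (P.e j) ≤ 0 := by
  obtain ⟨x, hx⟩ := hi
  obtain ⟨y, hy⟩ := hj
  rcases hy.2.2 i with hneg | hzero
  · exact hP.mink_nonpos hx hy.1 (wallInterior_subset_wall j hy) hneg
  · exact absurd (facet_eq_wall hjF fun p hp => hzero p hp.2).symm hij

theorem IsNonobtuse.ncard_facets_mem_le (hP : P.IsNonobtuse) (hn : 2 ≤ n)
    {v : EuclideanSpace ℝ (Fin n)} (hv : ‖v‖ = 1) :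
    {F ∈ P.faces (n - 1) | v ∈ F}.ncard ≤ 2 * (n - 1) := by
  have : Fintype {F ∈ P.faces (n - 1) | v ∈ F} := ((finite_facets hn).sep _).fintype
  choose i hwall hint using fun F : {F ∈ P.faces (n - 1) | v ∈ F} =>
    exists_facet_eq_wall hn F.2.1
  rw [← Nat.card_coe_set_eq, Nat.card_eq_fintype_card]
  refine card_le_of_mink_nonpos_of_height_eq_zero (fun F => P.e (i F))
    (fun F => P.unit (i F) ▸ one_pos) (fun F G hFG => ?_) hv fun F => ?_
  · refine hP.mink_nonpos_of_wall_ne (hint F) (hint G) (hwall G ▸ G.2.1) ?_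
    rw [← hwall, ← hwall]
    exact Subtype.coe_ne_coe.2 hFG
  · exact (hwall F ▸ F.2.2 : v ∈ P.wall (i F)).2

end Facets

end HypPolyhedron

theorem ideal_vertices_vs_facets_general (n : ℕ) (hn : 2 ≤ n) (P : HypPolyhedron n)
    (hfin : P.idealVerts.Finite) (hP : P.IsNonobtuse) :
    P.a (n - 1) * sInf {m | ∃ F ∈ P.faces (n - 1), (P.idealVerts ∩ F).ncard = m}
      ≤ 2 * (n - 1) * P.vInf := by
  classical
  have hfac : (P.faces (n - 1)).Finite := HypPolyhedron.finite_facets hn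
  rw [HypPolyhedron.a, HypPolyhedron.vInf, Set.ncard_eq_toFinset_card _ hfac,
    Set.ncard_eq_toFinset_card _ hfin, mul_comm (2 * (n - 1))]
  refine Finset.card_mul_le_card_mul (fun F v => v ∈ F) (fun F hF => ?_) fun v hv => ?_
  · refine Nat.sInf_le ⟨F, hfac.mem_toFinset.1 hF, ?_⟩
    rw [← Set.ncard_coe_finset, Finset.coe_bipartiteAbove, Set.inter_def]
    simp only [hfin.mem_toFinset]
  · rw [← Set.ncard_coe_finset, Finset.coe_bipartiteBelow]
    simp only [hfac.mem_toFinset]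
    exact hP.ncard_facets_mem_le hn (hfin.mem_toFinset.1 hv).2

/-- Double counting of ideal vertices: if `v\'_∞(P)` is the minimal number of ideal
vertices contained in a facet of `P`, then
`2(n-1) ⬝ v_∞(P) ≥ a_{n-1}(P) ⬝ v\'_∞(P)`. -/
theorem ideal_vertices_vs_facets (n : ℕ) (hn : 2 ≤ n) (P : HypPolyhedron n)
    (hfv : P.FiniteVolume) (hra : P.IsRightAngled) (hnc : ¬ P.IsCompactPoly) :
    P.a (n - 1) * sInf {m | ∃ F ∈ P.faces (n - 1), (P.idealVerts ∩ F).ncard = m}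
      ≤ 2 * (n - 1) * P.vInf :=
  ideal_vertices_vs_facets_general n hn P (hfv.1.subset fun _ hv => hv.1) hra.isNonobtuse
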